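/- Let S > 0, 0 < δ₁ < S, δ₂ > 0, and let χ : [0,S] × ∂Ω → [0,∞) be continuous with χ(t,x) = δ₂ for all (t,x) ∈ [δ₁,S] × ∂Ω. Let q, V : (0,S) × Ω → ℝ be continuous and bounded with V(t,x) ≤ q(t,x) for all (t,x) ∈ (0,S) × Ω. Let w be a classical solution of ∂_t w − Δw + q w = 0 in (0,S) × Ω with lateral boundary values χ and zero initial values, and let v be a classical solution of ∂_t v − Δv + V v = 0 in (0,S) × Ω with lateral boundary values χ and zero initial values. Then the constant a₁ := inf { w(t,x) : (t,x) ∈ [δ₁,S] × cl(Ω) } is strictly positive and v(t,x) ≥ a₁ for all (t,x) ∈ [δ₁,S] × cl(Ω). -/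

import Mathlib

/-!
By the weak maximum principle a supersolution of `∂ₜu - Δu + cu = 0` with nonnegative parabolic
boundary values is nonnegative: for `r` large, `exp (-r t) u` cannot have a negative interior
minimum. Hence `w ≥ 0`, so `V ≤ q` makes `w` a subsolution of the equation of `v`, and `w ≤ v`.

It remains to see that `w > 0` on the compact set `[δ₁, S] × cl Ω`. By continuity `χ > δ₂ / 2` after
some time `τ < δ₁`. Given `T > τ`, compare `w` with the damped travelling exponential
`ε exp (-C t) (exp (α x₀ + α² t + b) - 1)`, which solves the equation with a constant potential
`C ≥ q`. For suitable parameters it is nonpositive up to time `τ` and at most `δ₂ / 2` until `S`,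
whereas a large speed `α` makes it positive on all of `cl Ω` at time `T`.
-/

open Set

namespace Paper

noncomputable section

/-- Time derivative `∂ₜu`. -/
def timeDeriv {n : ℕ} (u : ℝ → (Fin n → ℝ) → ℝ) (t : ℝ) (x : Fin n → ℝ) : ℝ :=
  deriv (fun s => u s x) t

/-- Spatial partial derivative `∂ᵢu`. -/
def spatialDeriv {n : ℕ} (u : ℝ → (Fin n → ℝ) → ℝ) (i : Fin n) (t : ℝ) (x : Fin n → ℝ) : ℝ :=
  deriv (fun s => u t (Function.update x i s)) (x i)

/-- Second spatial partial derivative `∂ᵢ∂ⱼu`. -/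
def spatialDeriv2 {n : ℕ} (u : ℝ → (Fin n → ℝ) → ℝ) (i j : Fin n) (t : ℝ)
    (x : Fin n → ℝ) : ℝ :=
  spatialDeriv (spatialDeriv u j) i t x

/-- Laplacian in the space variables. -/
def laplacian {n : ℕ} (u : ℝ → (Fin n → ℝ) → ℝ) (t : ℝ) (x : Fin n → ℝ) : ℝ :=
  ∑ i, spatialDeriv2 u i i t x

/-- Parabolic regularity: `u` is continuous on `[0,S] × cl Ω`, and `∂ₜu` together with all
spatial partial derivatives of `u` up to order 2 exist and are continuous on `(0,S) × Ω`. -/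
structure ParabolicRegular {n : ℕ} (Ω : Set (Fin n → ℝ)) (S : ℝ)
    (u : ℝ → (Fin n → ℝ) → ℝ) : Prop where
  cont : ContinuousOn (fun p : ℝ × (Fin n → ℝ) => u p.1 p.2) (Icc 0 S ×ˢ closure Ω)
  diff_t : ∀ t ∈ Ioo 0 S, ∀ x ∈ Ω, DifferentiableAt ℝ (fun s => u s x) t
  diff_x : ∀ t ∈ Ioo 0 S, ∀ x ∈ Ω, ∀ i,
    DifferentiableAt ℝ (fun s => u t (Function.update x i s)) (x i)
  diff_xx : ∀ t ∈ Ioo 0 S, ∀ x ∈ Ω, ∀ i j,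
    DifferentiableAt ℝ (fun s => spatialDeriv u j t (Function.update x i s)) (x i)
  cont_t : ContinuousOn (fun p : ℝ × (Fin n → ℝ) => timeDeriv u p.1 p.2) (Ioo 0 S ×ˢ Ω)
  cont_x : ∀ i, ContinuousOn (fun p : ℝ × (Fin n → ℝ) => spatialDeriv u i p.1 p.2)
    (Ioo 0 S ×ˢ Ω)
  cont_xx : ∀ i j, ContinuousOn (fun p : ℝ × (Fin n → ℝ) => spatialDeriv2 u i j p.1 p.2)
    (Ioo 0 S ×ˢ Ω)

/-- Classical solution of `∂ₜu − Δu + c u = f` in `(0,S) × Ω` with lateral boundary values `g`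
and zero initial values. -/
structure IsClassicalSolution {n : ℕ} (Ω : Set (Fin n → ℝ)) (S : ℝ)
    (c f g u : ℝ → (Fin n → ℝ) → ℝ) extends ParabolicRegular Ω S u : Prop where
  eqn : ∀ t ∈ Ioo 0 S, ∀ x ∈ Ω, timeDeriv u t x - laplacian u t x + c t x * u t x = f t x
  lateral : ∀ t ∈ Icc 0 S, ∀ x ∈ frontier Ω, u t x = g t x
  initial : ∀ x ∈ closure Ω, u 0 x = 0

/-- `∂_u F` for a semilinear term `F(t,x,u)`. -/
def uDeriv {n : ℕ} (F : ℝ → (Fin n → ℝ) → ℝ → ℝ) (t : ℝ) (x : Fin n → ℝ) (u : ℝ) : ℝ :=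
  deriv (F t x) u

/-- `∂_u² F`. -/
def uDeriv2 {n : ℕ} (F : ℝ → (Fin n → ℝ) → ℝ → ℝ) : ℝ → (Fin n → ℝ) → ℝ → ℝ :=
  uDeriv (uDeriv F)

/-- `∂_u³ F`. -/
def uDeriv3 {n : ℕ} (F : ℝ → (Fin n → ℝ) → ℝ → ℝ) : ℝ → (Fin n → ℝ) → ℝ → ℝ :=
  uDeriv (uDeriv2 F)

/-- `∂_u⁴ F`. -/
def uDeriv4 {n : ℕ} (F : ℝ → (Fin n → ℝ) → ℝ → ℝ) : ℝ → (Fin n → ℝ) → ℝ → ℝ :=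
  uDeriv (uDeriv3 F)

/-- `∂ₜF` for `F` depending on `(t,x,u)`. -/
def FtDeriv {n : ℕ} (F : ℝ → (Fin n → ℝ) → ℝ → ℝ) (t : ℝ) (x : Fin n → ℝ) (u : ℝ) : ℝ :=
  deriv (fun s => F s x u) t

/-- `∂_{xᵢ}F` for `F` depending on `(t,x,u)`. -/
def FxDeriv {n : ℕ} (F : ℝ → (Fin n → ℝ) → ℝ → ℝ) (i : Fin n) (t : ℝ) (x : Fin n → ℝ)
    (u : ℝ) : ℝ :=
  deriv (fun s => F t (Function.update x i s) u) (x i)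

/-- `F` is continuous on `[0,S] × cl Ω × ℝ` and continuously differentiable in the last
variable. -/
def C1InU {n : ℕ} (Ω : Set (Fin n → ℝ)) (S : ℝ) (F : ℝ → (Fin n → ℝ) → ℝ → ℝ) : Prop :=
  ContinuousOn (fun p : ℝ × (Fin n → ℝ) × ℝ => F p.1 p.2.1 p.2.2)
    (Icc 0 S ×ˢ closure Ω ×ˢ (univ : Set ℝ)) ∧
  (∀ t ∈ Icc 0 S, ∀ x ∈ closure Ω, ∀ u : ℝ, DifferentiableAt ℝ (F t x) u) ∧
  ContinuousOn (fun p : ℝ × (Fin n → ℝ) × ℝ => uDeriv F p.1 p.2.1 p.2.2)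
    (Icc 0 S ×ˢ closure Ω ×ˢ (univ : Set ℝ))

/-- `F` is continuous and twice continuously differentiable in the last variable. -/
def C2InU {n : ℕ} (Ω : Set (Fin n → ℝ)) (S : ℝ) (F : ℝ → (Fin n → ℝ) → ℝ → ℝ) : Prop :=
  C1InU Ω S F ∧
  (∀ t ∈ Icc 0 S, ∀ x ∈ closure Ω, ∀ u : ℝ, DifferentiableAt ℝ (uDeriv F t x) u) ∧
  ContinuousOn (fun p : ℝ × (Fin n → ℝ) × ℝ => uDeriv2 F p.1 p.2.1 p.2.2)
    (Icc 0 S ×ˢ closure Ω ×ˢ (univ : Set ℝ))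

/-- `‖f‖_{W^{1,∞}} ≤ B` on `[0,S] × cl Ω`, stated componentwise: `f`, `∂ₜf` and all `∂ᵢf`
are bounded by `B` in absolute value. -/
def W1infLE {n : ℕ} (Ω : Set (Fin n → ℝ)) (S : ℝ) (f : ℝ → (Fin n → ℝ) → ℝ) (B : ℝ) : Prop :=
  ∀ t ∈ Icc 0 S, ∀ x ∈ closure Ω,
    |f t x| ≤ B ∧ |timeDeriv f t x| ≤ B ∧ ∀ i, |spatialDeriv f i t x| ≤ B

/-- `f` has bounded continuous first-order derivatives on `[0,S] × cl Ω`. -/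
def C1Bounded {n : ℕ} (Ω : Set (Fin n → ℝ)) (S : ℝ) (f : ℝ → (Fin n → ℝ) → ℝ) : Prop :=
  (∀ t ∈ Icc 0 S, ∀ x ∈ closure Ω, DifferentiableAt ℝ (fun s => f s x) t ∧
    ∀ i, DifferentiableAt ℝ (fun s => f t (Function.update x i s)) (x i)) ∧
  ContinuousOn (fun p : ℝ × (Fin n → ℝ) => f p.1 p.2) (Icc 0 S ×ˢ closure Ω) ∧
  ContinuousOn (fun p : ℝ × (Fin n → ℝ) => timeDeriv f p.1 p.2) (Icc 0 S ×ˢ closure Ω) ∧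
  (∀ i, ContinuousOn (fun p : ℝ × (Fin n → ℝ) => spatialDeriv f i p.1 p.2)
    (Icc 0 S ×ˢ closure Ω)) ∧
  ∃ B, W1infLE Ω S f B

/-- Componentwise bound `‖f‖_* ≤ ε` for the parabolic Schauder norm of
`C([0,S];C^{2+α}(cl Ω)) ∩ C^{1+α/2}([0,S];C(cl Ω))`: sup bounds on `f`, `∂ₜf`, spatial
derivatives up to order 2, the `α`-Hölder (in `x`) seminorms of the second spatial derivatives,
and the `α/2`-Hölder (in `t`) seminorm of `∂ₜf`. -/
def SchauderLE {n : ℕ} (α : ℝ) (Ω : Set (Fin n → ℝ)) (S : ℝ) (f : ℝ → (Fin n → ℝ) → ℝ)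
    (ε : ℝ) : Prop :=
  (∀ t ∈ Icc 0 S, ∀ x ∈ closure Ω,
    |f t x| ≤ ε ∧ |timeDeriv f t x| ≤ ε ∧ (∀ i, |spatialDeriv f i t x| ≤ ε) ∧
    ∀ i j, |spatialDeriv2 f i j t x| ≤ ε) ∧
  (∀ t ∈ Icc 0 S, ∀ x ∈ closure Ω, ∀ x' ∈ closure Ω, ∀ i j,
    |spatialDeriv2 f i j t x - spatialDeriv2 f i j t x'| ≤ ε * dist x x' ^ α) ∧
  (∀ x ∈ closure Ω, ∀ t ∈ Icc 0 S, ∀ t' ∈ Icc 0 S,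
    |timeDeriv f t x - timeDeriv f t' x| ≤ ε * |t - t'| ^ (α / 2))

/-- `G`, `∂ₜG` and the `∂_{xᵢ}G` exist and are continuous on `[0,S] × cl Ω × ℝ`. -/
def C1InTX {n : ℕ} (Ω : Set (Fin n → ℝ)) (S : ℝ) (G : ℝ → (Fin n → ℝ) → ℝ → ℝ) : Prop :=
  (∀ t ∈ Icc 0 S, ∀ x ∈ closure Ω, ∀ u : ℝ,
    DifferentiableAt ℝ (fun s => G s x u) t ∧
    ∀ i, DifferentiableAt ℝ (fun s => G t (Function.update x i s) u) (x i)) ∧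
  ContinuousOn (fun p : ℝ × (Fin n → ℝ) × ℝ => G p.1 p.2.1 p.2.2)
    (Icc 0 S ×ˢ closure Ω ×ˢ (univ : Set ℝ)) ∧
  ContinuousOn (fun p : ℝ × (Fin n → ℝ) × ℝ => FtDeriv G p.1 p.2.1 p.2.2)
    (Icc 0 S ×ˢ closure Ω ×ˢ (univ : Set ℝ)) ∧
  ∀ i, ContinuousOn (fun p : ℝ × (Fin n → ℝ) × ℝ => FxDeriv G i p.1 p.2.1 p.2.2)
    (Icc 0 S ×ˢ closure Ω ×ˢ (univ : Set ℝ))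

/-- `G`, `∂ₜG` and the `∂_{xᵢ}G` are bounded by `κ(|u|)` on `[0,S] × cl Ω`, for every `u`. -/
def BoundedByKappa {n : ℕ} (Ω : Set (Fin n → ℝ)) (S : ℝ) (G : ℝ → (Fin n → ℝ) → ℝ → ℝ)
    (κ : ℝ → ℝ) : Prop :=
  ∀ u : ℝ, ∀ t ∈ Icc 0 S, ∀ x ∈ closure Ω,
    |G t x u| ≤ κ |u| ∧ |FtDeriv G t x u| ≤ κ |u| ∧ ∀ i, |FxDeriv G i t x u| ≤ κ |u|

/-- The family of solutions of the semilinear problem with boundary data `λχ`, together with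
its first and second linearizations in the boundary parameter `λ`. -/
structure SemilinearFamily {n : ℕ} (Ω : Set (Fin n → ℝ)) (S r : ℝ)
    (χ : ℝ → (Fin n → ℝ) → ℝ) (F : ℝ → (Fin n → ℝ) → ℝ → ℝ)
    (v v1 v2 : ℝ → ℝ → (Fin n → ℝ) → ℝ) : Prop where
  sol : ∀ lam ∈ Icc (-r) r, IsClassicalSolution Ω S (fun _ _ => (0 : ℝ))
      (fun t x => -F t x (v lam t x)) (fun t x => lam * χ t x) (v lam)
  zero : ∀ t ∈ Icc 0 S, ∀ x ∈ closure Ω, v 0 t x = 0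
  lin1 : ∀ lam ∈ Icc (-r) r, IsClassicalSolution Ω S
      (fun t x => uDeriv F t x (v lam t x)) (fun _ _ => (0 : ℝ)) χ (v1 lam)
  lin2 : ∀ lam ∈ Icc (-r) r, IsClassicalSolution Ω S
      (fun t x => uDeriv F t x (v lam t x))
      (fun t x => -uDeriv2 F t x (v lam t x) * (v1 lam t x) ^ 2) (fun _ _ => (0 : ℝ)) (v2 lam)
  cont_lam : ∀ t ∈ Icc 0 S, ∀ x ∈ closure Ω, ContinuousOn (fun lam => v lam t x) (Icc (-r) r)
  deriv1 : ∀ t ∈ Icc 0 S, ∀ x ∈ closure Ω, ∀ lam ∈ Ioo (-r) r,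
      HasDerivAt (fun μ => v μ t x) (v1 lam t x) lam
  deriv2 : ∀ t ∈ Icc 0 S, ∀ x ∈ closure Ω, ∀ lam ∈ Ioo (-r) r,
      HasDerivAt (fun μ => v1 μ t x) (v2 lam t x) lam

end

end Paper

open Paper Set

namespace Paper

open Topology Filter
open scoped Matrix

theorem eventually_forall_lt_of_continuousOn_prod {X Y α : Type*} [TopologicalSpace X]
    [TopologicalSpace Y] [TopologicalSpace α] [LinearOrder α] [OrderClosedTopology α]
    {f : X × Y → α} {s : Set X} {K : Set Y} {x₀ : X} {c : α} (hK : IsCompact K)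
    (hf : ContinuousOn f (s ×ˢ K)) (hx₀ : x₀ ∈ s) (hc : ∀ y ∈ K, c < f (x₀, y)) :
    ∀ᶠ x in 𝓝[s] x₀, ∀ y ∈ K, c < f (x, y) := by
  have hnear : ∀ᶠ x in 𝓝 x₀, ∀ y ∈ K, (x, y) ∈ s ×ˢ K → c < f (x, y) :=
    hK.eventually_forall_of_forall_eventually fun y hy =>
      eventually_nhdsWithin_iff.1 ((hf (x₀, y) ⟨hx₀, hy⟩).eventually_const_lt (hc y hy))
  exact eventually_nhdsWithin_iff.2 (hnear.mono fun x hx hxs y hy => hx y hy ⟨hxs, hy⟩)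

theorem deriv_deriv_nonneg_of_isLocalMin {f : ℝ → ℝ} {a : ℝ} (hf : ContinuousAt f a)
    (hmin : IsLocalMin f a) : 0 ≤ deriv (deriv f) a := by
  by_contra! hneg
  have hmax : IsLocalMax f a := isLocalMax_of_deriv_deriv_neg hneg hmin.deriv_eq_zero hf
  have hconst : f =ᶠ[𝓝 a] fun _ => f a := by
    filter_upwards [hmin, hmax] with s hle hge using le_antisymm hge hle
  have hzero : deriv (deriv f) a = 0 := by
    rw [hconst.deriv.deriv_eq, deriv_const', deriv_const]
  exact hneg.ne hzero

theorem hasDerivWithinAt_nonpos_of_isLocalMinOn_Iic {f : ℝ → ℝ} {f' t : ℝ}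
    (hf : HasDerivWithinAt f f' (Iic t) t) (hmin : IsLocalMinOn f (Iic t) t) : f' ≤ 0 := by
  have hcone : (-1 : ℝ) ∈ posTangentConeAt (Iic t) t :=
    mem_posTangentConeAt_of_segment_subset
      ((convex_Iic t).segment_subset self_mem_Iic (by simp))
  simpa using hmin.hasFDerivWithinAt_nonneg hf.hasFDerivWithinAt hcone

theorem hasDerivAt_le_mul_of_isLocalMinOn_exp_mul {f : ℝ → ℝ} {f' t r : ℝ}
    (hf : HasDerivAt f f' t) (hmin : IsLocalMinOn (fun s => Real.exp (-r * s) * f s) (Iic t) t) :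
    f' ≤ r * f t := by
  have hderiv : HasDerivAt (fun s => Real.exp (-r * s) * f s)
      (Real.exp (-r * t) * (f' - r * f t)) t :=
    (((hasDerivAt_id' t).const_mul (-r)).exp.mul hf).congr_deriv (by ring)
  have hnonpos := hasDerivWithinAt_nonpos_of_isLocalMinOn_Iic hderiv.hasDerivWithinAt hmin
  linarith [nonpos_of_mul_nonpos_right hnonpos (Real.exp_pos _)]

/-- The operator `∂ₜ - Δ + c` applied to `u`. -/
noncomputable def parabolicOp {n : ℕ} (c u : ℝ → (Fin n → ℝ) → ℝ) (t : ℝ) (x : Fin n → ℝ) : ℝ :=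
  timeDeriv u t x - laplacian u t x + c t x * u t x

section Operators

variable {n : ℕ} {c d u v : ℝ → (Fin n → ℝ) → ℝ} {t : ℝ} {x : Fin n → ℝ}

theorem parabolicOp_eq_add_sub_mul :
    parabolicOp c u t x = parabolicOp d u t x + (c t x - d t x) * u t x := by
  simp only [parabolicOp]
  ring

theorem tendsto_update_nhds (x : Fin n → ℝ) (i : Fin n) :
    Tendsto (Function.update x i) (𝓝 (x i)) (𝓝 x) := by
  have hcont : Continuous (Function.update x i) := by fun_prop
  simpa using hcont.tendsto (x i)

theorem spatialDeriv_update (i : Fin n) (s : ℝ) :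
    spatialDeriv u i t (Function.update x i s) =
      deriv (fun r => u t (Function.update x i r)) s := by
  simp only [spatialDeriv, Function.update_idem, Function.update_self]

theorem laplacian_nonneg_of_isLocalMin (hu : ContinuousAt (u t) x) (hmin : IsLocalMin (u t) x) :
    0 ≤ laplacian u t x := by
  refine Finset.sum_nonneg fun i _ => ?_
  simp only [spatialDeriv2, spatialDeriv.eq_1 (spatialDeriv u i), spatialDeriv_update]
  have hupdate : ContinuousAt (Function.update x i) (x i) := by fun_prop
  nth_rewrite 1 [← Function.update_eq_self i x] at hu hmin
  exact deriv_deriv_nonneg_of_isLocalMin (hu.comp' hupdate) (hmin.comp_tendsto hupdate)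

theorem timeDeriv_sub (hu : DifferentiableAt ℝ (fun s => u s x) t)
    (hv : DifferentiableAt ℝ (fun s => v s x) t) :
    timeDeriv (u - v) t x = timeDeriv u t x - timeDeriv v t x :=
  deriv_sub hu hv

theorem spatialDeriv_sub {i : Fin n}
    (hu : DifferentiableAt ℝ (fun s => u t (Function.update x i s)) (x i))
    (hv : DifferentiableAt ℝ (fun s => v t (Function.update x i s)) (x i)) :
    spatialDeriv (u - v) i t x = spatialDeriv u i t x - spatialDeriv v i t x :=
  deriv_sub hu hv

end Operators

namespace ParabolicRegular

variable {n : ℕ} {Ω : Set (Fin n → ℝ)} {S t : ℝ} {u v : ℝ → (Fin n → ℝ) → ℝ} {x : Fin n → ℝ}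

theorem continuousAt_space (hΩo : IsOpen Ω) (hu : ParabolicRegular Ω S u) (ht : t ∈ Icc 0 S)
    (hx : x ∈ Ω) : ContinuousAt (u t) x := by
  have hcont : ContinuousOn (u t) (closure Ω) :=
    hu.cont.comp (f := fun y => (t, y)) (by fun_prop) fun y hy => ⟨ht, hy⟩
  exact hcont.continuousAt (mem_of_superset (hΩo.mem_nhds hx) subset_closure)

theorem continuousOn_time (hu : ParabolicRegular Ω S u) (hx : x ∈ closure Ω) :
    ContinuousOn (fun s => u s x) (Icc 0 S) :=
  hu.cont.comp (f := fun s => (s, x)) (by fun_prop) fun _ hs => ⟨hs, hx⟩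

theorem spatialDeriv_sub_eventuallyEq (hΩo : IsOpen Ω) (hu : ParabolicRegular Ω S u)
    (hv : ParabolicRegular Ω S v) (ht : t ∈ Ioo 0 S) (hx : x ∈ Ω) (i j : Fin n) :
    (fun s => spatialDeriv (u - v) j t (Function.update x i s)) =ᶠ[𝓝 (x i)]
      (fun s => spatialDeriv u j t (Function.update x i s)) -
        fun s => spatialDeriv v j t (Function.update x i s) := by
  filter_upwards [(tendsto_update_nhds x i).eventually_mem (hΩo.mem_nhds hx)] with s hs
  exact spatialDeriv_sub (hu.diff_x t ht _ hs j) (hv.diff_x t ht _ hs j)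

theorem spatialDeriv2_sub (hΩo : IsOpen Ω) (hu : ParabolicRegular Ω S u)
    (hv : ParabolicRegular Ω S v) (ht : t ∈ Ioo 0 S) (hx : x ∈ Ω) (i j : Fin n) :
    spatialDeriv2 (u - v) i j t x = spatialDeriv2 u i j t x - spatialDeriv2 v i j t x :=
  (hu.spatialDeriv_sub_eventuallyEq hΩo hv ht hx i j).deriv_eq.trans
    (deriv_sub (hu.diff_xx t ht x hx i j) (hv.diff_xx t ht x hx i j))

theorem sub (hΩo : IsOpen Ω) (hu : ParabolicRegular Ω S u) (hv : ParabolicRegular Ω S v) :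
    ParabolicRegular Ω S (u - v) where
  cont := hu.cont.sub hv.cont
  diff_t t ht x hx := (hu.diff_t t ht x hx).sub (hv.diff_t t ht x hx)
  diff_x t ht x hx i := (hu.diff_x t ht x hx i).sub (hv.diff_x t ht x hx i)
  diff_xx t ht x hx i j :=
    ((hu.diff_xx t ht x hx i j).sub (hv.diff_xx t ht x hx i j)).congr_of_eventuallyEq
      (hu.spatialDeriv_sub_eventuallyEq hΩo hv ht hx i j)
  cont_t := (hu.cont_t.sub hv.cont_t).congr fun p hp =>
    timeDeriv_sub (hu.diff_t p.1 hp.1 p.2 hp.2) (hv.diff_t p.1 hp.1 p.2 hp.2)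
  cont_x i := ((hu.cont_x i).sub (hv.cont_x i)).congr fun p hp =>
    spatialDeriv_sub (hu.diff_x p.1 hp.1 p.2 hp.2 i) (hv.diff_x p.1 hp.1 p.2 hp.2 i)
  cont_xx i j := ((hu.cont_xx i j).sub (hv.cont_xx i j)).congr fun _ hp =>
    hu.spatialDeriv2_sub hΩo hv hp.1 hp.2 i j

theorem parabolicOp_sub (hΩo : IsOpen Ω) (hu : ParabolicRegular Ω S u)
    (hv : ParabolicRegular Ω S v) (c : ℝ → (Fin n → ℝ) → ℝ) (ht : t ∈ Ioo 0 S) (hx : x ∈ Ω) :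
    parabolicOp c (u - v) t x = parabolicOp c u t x - parabolicOp c v t x := by
  simp only [parabolicOp, laplacian, hu.spatialDeriv2_sub hΩo hv ht hx, Finset.sum_sub_distrib,
    timeDeriv_sub (hu.diff_t t ht x hx) (hv.diff_t t ht x hx), Pi.sub_apply]
  ring

theorem parabolicOp_neg_of_isLocalMin (hΩo : IsOpen Ω) (hu : ParabolicRegular Ω S u)
    {c : ℝ → (Fin n → ℝ) → ℝ} {r : ℝ} (ht : t ∈ Ioo 0 S) (hx : x ∈ Ω) (hr : -c t x < r)
    (hneg : u t x < 0) (hspace : IsLocalMin (u t) x)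
    (htime : IsLocalMinOn (fun s => Real.exp (-r * s) * u s x) (Iic t) t) :
    parabolicOp c u t x < 0 := by
  have hlap : 0 ≤ laplacian u t x :=
    laplacian_nonneg_of_isLocalMin (hu.continuousAt_space hΩo (Ioo_subset_Icc_self ht) hx) hspace
  have hderiv : timeDeriv u t x ≤ r * u t x :=
    hasDerivAt_le_mul_of_isLocalMinOn_exp_mul (hu.diff_t t ht x hx).hasDerivAt htime
  calc parabolicOp c u t x ≤ (r + c t x) * u t x := by simp only [parabolicOp]; linarith
    _ < 0 := mul_neg_of_pos_of_neg (by linarith) hneg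

end ParabolicRegular

section Comparison

variable {n : ℕ} {Ω : Set (Fin n → ℝ)} {S m : ℝ} {c u v : ℝ → (Fin n → ℝ) → ℝ}

theorem nonneg_of_parabolicOp_nonneg_of_lt (hΩo : IsOpen Ω) (hΩb : Bornology.IsBounded Ω)
    (hu : ParabolicRegular Ω S u) (hc : ∀ t ∈ Ioo 0 S, ∀ x ∈ Ω, m ≤ c t x)
    (hop : ∀ t ∈ Ioo 0 S, ∀ x ∈ Ω, 0 ≤ parabolicOp c u t x)
    (hlat : ∀ t ∈ Icc 0 S, ∀ x ∈ frontier Ω, 0 ≤ u t x) (hinit : ∀ x ∈ closure Ω, 0 ≤ u 0 x) :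
    ∀ t ∈ Ico 0 S, ∀ x ∈ closure Ω, 0 ≤ u t x := by
  intro T hT y hy
  by_contra! hneg
  -- Any `r > -m` works: the factor `exp (-r * t)` makes the effective potential `c + r` positive.
  set r := 1 - m
  have hcont : ContinuousOn (fun p : ℝ × (Fin n → ℝ) => Real.exp (-r * p.1) * u p.1 p.2)
      (Icc 0 T ×ˢ closure Ω) :=
    ContinuousOn.mul (by fun_prop) (hu.cont.mono (prod_mono_left (Icc_subset_Icc_right hT.2.le)))
  obtain ⟨⟨t, x⟩, ⟨ht, hx⟩, hmin⟩ := (isCompact_Icc.prod hΩb.isCompact_closure).exists_isMinOn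
    ⟨(T, y), right_mem_Icc.2 hT.1, hy⟩ hcont
  dsimp only at ht hx
  have hle : ∀ s ∈ Icc 0 T, ∀ z ∈ closure Ω,
      Real.exp (-r * t) * u t x ≤ Real.exp (-r * s) * u s z :=
    fun s hs z hz => hmin (a := (s, z)) ⟨hs, hz⟩
  have hneg' : u t x < 0 := by
    have hlt := (hle T (right_mem_Icc.2 hT.1) y hy).trans_lt
      (mul_neg_of_pos_of_neg (Real.exp_pos _) hneg)
    exact neg_of_mul_neg_right hlt (Real.exp_pos _).le
  have ht0 : 0 < t := ht.1.lt_of_ne fun h => (hinit x hx).not_gt (h ▸ hneg')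
  have htS : t < S := ht.2.trans_lt hT.2
  have hxΩ : x ∈ Ω := by
    by_contra hxΩ
    exact (hlat t ⟨ht.1, htS.le⟩ x (hΩo.frontier_eq ▸ ⟨hx, hxΩ⟩)).not_gt hneg'
  have hspace : IsLocalMin (u t) x := by
    filter_upwards [hΩo.mem_nhds hxΩ] with z hz
    exact le_of_mul_le_mul_left (hle t ht z (subset_closure hz)) (Real.exp_pos _)
  have htime : IsLocalMinOn (fun s => Real.exp (-r * s) * u s x) (Iic t) t := by
    filter_upwards [self_mem_nhdsWithin, mem_nhdsWithin_of_mem_nhds (Ioi_mem_nhds ht0)]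
      with s hst hs0
    exact hle s ⟨hs0.le, hst.trans ht.2⟩ x hx
  have hcr : -c t x < r := by linarith [hc t ⟨ht0, htS⟩ x hxΩ]
  exact (hop t ⟨ht0, htS⟩ x hxΩ).not_gt
    (hu.parabolicOp_neg_of_isLocalMin hΩo ⟨ht0, htS⟩ hxΩ hcr hneg' hspace htime)

theorem nonneg_of_parabolicOp_nonneg (hΩo : IsOpen Ω) (hΩb : Bornology.IsBounded Ω)
    (hu : ParabolicRegular Ω S u) (hc : ∀ t ∈ Ioo 0 S, ∀ x ∈ Ω, m ≤ c t x)
    (hop : ∀ t ∈ Ioo 0 S, ∀ x ∈ Ω, 0 ≤ parabolicOp c u t x)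
    (hlat : ∀ t ∈ Icc 0 S, ∀ x ∈ frontier Ω, 0 ≤ u t x) (hinit : ∀ x ∈ closure Ω, 0 ≤ u 0 x) :
    ∀ t ∈ Icc 0 S, ∀ x ∈ closure Ω, 0 ≤ u t x := by
  intro t ht x hx
  obtain rfl | hS := (ht.1.trans ht.2).eq_or_lt
  · rw [le_antisymm ht.2 ht.1]
    exact hinit x hx
  have hcl : closure (Ico 0 S) = Icc 0 S := closure_Ico hS.ne
  have hbefore := nonneg_of_parabolicOp_nonneg_of_lt hΩo hΩb hu hc hop hlat hinit
  exact le_on_closure (fun s hs => hbefore s hs x hx) continuousOn_const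
    (hcl ▸ hu.continuousOn_time hx) (hcl ▸ ht)

theorem le_of_parabolicOp_le (hΩo : IsOpen Ω) (hΩb : Bornology.IsBounded Ω)
    (hu : ParabolicRegular Ω S u) (hv : ParabolicRegular Ω S v)
    (hc : ∀ t ∈ Ioo 0 S, ∀ x ∈ Ω, m ≤ c t x)
    (hop : ∀ t ∈ Ioo 0 S, ∀ x ∈ Ω, parabolicOp c u t x ≤ parabolicOp c v t x)
    (hlat : ∀ t ∈ Icc 0 S, ∀ x ∈ frontier Ω, u t x ≤ v t x)
    (hinit : ∀ x ∈ closure Ω, u 0 x ≤ v 0 x) :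
    ∀ t ∈ Icc 0 S, ∀ x ∈ closure Ω, u t x ≤ v t x := by
  intro t ht x hx
  refine sub_nonneg.1 (nonneg_of_parabolicOp_nonneg hΩo hΩb (hv.sub hΩo hu) hc
    (fun s hs y hy => ?_) (fun s hs y hy => sub_nonneg.2 (hlat s hs y hy))
    (fun y hy => sub_nonneg.2 (hinit y hy)) t ht x hx)
  rw [hv.parabolicOp_sub hΩo hu c hs hy]
  exact sub_nonneg.2 (hop s hs y hy)

end Comparison

namespace IsClassicalSolution

variable {n : ℕ} {Ω : Set (Fin n → ℝ)} {S T δ m : ℝ} {c d f f' g g' u v : ℝ → (Fin n → ℝ) → ℝ}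

theorem nonneg (hΩo : IsOpen Ω) (hΩb : Bornology.IsBounded Ω)
    (hu : IsClassicalSolution Ω S c f g u) (hc : ∀ t ∈ Ioo 0 S, ∀ x ∈ Ω, m ≤ c t x)
    (hf : ∀ t ∈ Ioo 0 S, ∀ x ∈ Ω, 0 ≤ f t x) (hg : ∀ t ∈ Icc 0 S, ∀ x ∈ frontier Ω, 0 ≤ g t x) :
    ∀ t ∈ Icc 0 S, ∀ x ∈ closure Ω, 0 ≤ u t x :=
  nonneg_of_parabolicOp_nonneg hΩo hΩb hu.toParabolicRegular hc
    (fun t ht x hx => (hf t ht x hx).trans_eq (hu.eqn t ht x hx).symm)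
    (fun t ht x hx => (hg t ht x hx).trans_eq (hu.lateral t ht x hx).symm)
    (fun x hx => (hu.initial x hx).ge)

theorem le_of_potential_le (hΩo : IsOpen Ω) (hΩb : Bornology.IsBounded Ω)
    (hu : IsClassicalSolution Ω S c f g u) (hv : IsClassicalSolution Ω S d f' g' v)
    (hd : ∀ t ∈ Ioo 0 S, ∀ x ∈ Ω, m ≤ d t x) (hdc : ∀ t ∈ Ioo 0 S, ∀ x ∈ Ω, d t x ≤ c t x)
    (hf : ∀ t ∈ Ioo 0 S, ∀ x ∈ Ω, f t x ≤ f' t x)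
    (hg : ∀ t ∈ Icc 0 S, ∀ x ∈ frontier Ω, g t x ≤ g' t x)
    (hu0 : ∀ t ∈ Icc 0 S, ∀ x ∈ closure Ω, 0 ≤ u t x) :
    ∀ t ∈ Icc 0 S, ∀ x ∈ closure Ω, u t x ≤ v t x := by
  refine le_of_parabolicOp_le hΩo hΩb hu.toParabolicRegular hv.toParabolicRegular hd
    (fun t ht x hx => ?_) (fun t ht x hx => ?_) (fun x hx => ?_)
  · calc parabolicOp d u t x = parabolicOp c u t x + (d t x - c t x) * u t x :=
          parabolicOp_eq_add_sub_mul
      _ ≤ parabolicOp c u t x := add_le_of_nonpos_right <| mul_nonpos_of_nonpos_of_nonneg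
          (sub_nonpos.2 (hdc t ht x hx)) (hu0 t (Ioo_subset_Icc_self ht) x (subset_closure hx))
      _ = f t x := hu.eqn t ht x hx
      _ ≤ f' t x := hf t ht x hx
      _ = parabolicOp d v t x := (hv.eqn t ht x hx).symm
  · rw [hu.lateral t ht x hx, hv.lateral t ht x hx]
    exact hg t ht x hx
  · rw [hu.initial x hx, hv.initial x hx]

theorem exists_lateral_lower_bound (hΩb : Bornology.IsBounded Ω)
    (hu : IsClassicalSolution Ω S c f g u) (hT : 0 < T) (hTS : T ≤ S)
    (hg : ∀ t ∈ Icc T S, ∀ x ∈ frontier Ω, δ < g t x) :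
    ∃ τ ∈ Ico 0 T, ∀ t ∈ Ioc τ S, ∀ x ∈ frontier Ω, δ < g t x := by
  have hK : IsCompact (frontier Ω) :=
    hΩb.isCompact_closure.of_isClosed_subset isClosed_frontier frontier_subset_closure
  have hnear : ∀ᶠ t in 𝓝[Icc 0 T] T, ∀ x ∈ frontier Ω, δ < u t x := by
    refine eventually_forall_lt_of_continuousOn_prod hK
      (hu.cont.mono (prod_mono (Icc_subset_Icc_right hTS) frontier_subset_closure))
      (right_mem_Icc.2 hT.le) fun x hx => ?_
    rw [hu.lateral T ⟨hT.le, hTS⟩ x hx]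
    exact hg T (left_mem_Icc.2 hTS) x hx
  rw [nhdsWithin_Icc_eq_nhdsLE hT] at hnear
  obtain ⟨τ, hτ, hsub⟩ := (mem_nhdsLE_iff_exists_mem_Ico_Ioc_subset hT).1 hnear
  refine ⟨τ, hτ, fun t ht x hx => ?_⟩
  rcases le_or_gt t T with htT | htT
  · rw [← hu.lateral t ⟨hτ.1.trans ht.1.le, ht.2⟩ x hx]
    exact hsub ⟨ht.1, htT⟩ x hx
  · exact hg t ⟨htT.le, ht.2⟩ x hx

end IsClassicalSolution

/-- The barrier `exp (-C t) (A exp (a ⬝ x + |a|² t) - B)`. The exponential in the bracket solves the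
heat equation, so the barrier solves `∂ₜh - Δh + C h = 0`; leaving `A` and `B` free makes the family
closed under `∂ₜ` and `∂ᵢ`. -/
noncomputable def expBarrier {n : ℕ} (C A B : ℝ) (a : Fin n → ℝ) (t : ℝ) (x : Fin n → ℝ) : ℝ :=
  Real.exp (-C * t) * (A * Real.exp (a ⬝ᵥ x + a ⬝ᵥ a * t) - B)

section ExpBarrier

variable {n : ℕ} (C A B : ℝ) (a : Fin n → ℝ)

theorem hasDerivAt_expBarrier_time (t : ℝ) (x : Fin n → ℝ) :
    HasDerivAt (fun s => expBarrier C A B a s x)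
      (expBarrier C (A * (a ⬝ᵥ a - C)) (-C * B) a t x) t := by
  have hdamp := ((hasDerivAt_id' t).const_mul (-C)).exp
  have hwave := ((((hasDerivAt_id' t).const_mul (a ⬝ᵥ a)).const_add (a ⬝ᵥ x)).exp.const_mul A)
  refine (hdamp.mul (hwave.sub_const B)).congr_deriv ?_
  simp only [expBarrier]
  ring

theorem hasDerivAt_dotProduct_update (x : Fin n → ℝ) (i : Fin n) (s : ℝ) :
    HasDerivAt (fun r => a ⬝ᵥ Function.update x i r) (a i) s := by
  have hterm (j : Fin n) : HasDerivAt (fun r => a j * Function.update x i r j)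
      (a j * (Pi.single i 1 : Fin n → ℝ) j) s :=
    (hasDerivAt_pi.1 (hasDerivAt_update x i s) j).const_mul (a j)
  refine (HasDerivAt.fun_sum fun j _ => hterm j).congr_deriv ?_
  exact dotProduct_single_one a i

theorem hasDerivAt_expBarrier_space (t : ℝ) (x : Fin n → ℝ) (i : Fin n) :
    HasDerivAt (fun s => expBarrier C A B a t (Function.update x i s))
      (expBarrier C (A * a i) 0 a t x) (x i) := by
  have hphase := (hasDerivAt_dotProduct_update a x i (x i)).add_const (a ⬝ᵥ a * t)
  refine (((hphase.exp.const_mul A).sub_const B).const_mul (Real.exp (-C * t))).congr_deriv ?_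
  simp only [expBarrier, Function.update_eq_self]
  ring

theorem timeDeriv_expBarrier :
    timeDeriv (expBarrier C A B a) = expBarrier C (A * (a ⬝ᵥ a - C)) (-C * B) a :=
  funext₂ fun t x => (hasDerivAt_expBarrier_time C A B a t x).deriv

theorem spatialDeriv_expBarrier (i : Fin n) :
    spatialDeriv (expBarrier C A B a) i = expBarrier C (A * a i) 0 a :=
  funext₂ fun t x => (hasDerivAt_expBarrier_space C A B a t x i).deriv

theorem spatialDeriv2_expBarrier (i j : Fin n) :
    spatialDeriv2 (expBarrier C A B a) i j = expBarrier C (A * a j * a i) 0 a := by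
  funext t x
  simp only [spatialDeriv2, spatialDeriv_expBarrier]

theorem continuous_expBarrier :
    Continuous fun p : ℝ × (Fin n → ℝ) => expBarrier C A B a p.1 p.2 := by
  unfold expBarrier dotProduct
  fun_prop

theorem parabolicRegular_expBarrier (Ω : Set (Fin n → ℝ)) (S : ℝ) :
    ParabolicRegular Ω S (expBarrier C A B a) where
  cont := (continuous_expBarrier C A B a).continuousOn
  diff_t t _ x _ := (hasDerivAt_expBarrier_time C A B a t x).differentiableAt
  diff_x t _ x _ i := (hasDerivAt_expBarrier_space C A B a t x i).differentiableAt
  diff_xx t _ x _ i j := by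
    rw [spatialDeriv_expBarrier]
    exact (hasDerivAt_expBarrier_space C (A * a j) 0 a t x i).differentiableAt
  cont_t := by
    rw [timeDeriv_expBarrier]
    exact (continuous_expBarrier C _ _ a).continuousOn
  cont_x i := by
    rw [spatialDeriv_expBarrier]
    exact (continuous_expBarrier C _ _ a).continuousOn
  cont_xx i j := by
    rw [spatialDeriv2_expBarrier]
    exact (continuous_expBarrier C _ _ a).continuousOn

theorem laplacian_expBarrier :
    laplacian (expBarrier C A B a) = expBarrier C (A * a ⬝ᵥ a) 0 a := by
  funext t x
  simp only [laplacian, spatialDeriv2_expBarrier, expBarrier, sub_zero]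
  rw [← Finset.mul_sum, ← Finset.sum_mul]
  simp only [mul_assoc, ← Finset.mul_sum, dotProduct]

theorem parabolicOp_expBarrier (t : ℝ) (x : Fin n → ℝ) :
    parabolicOp (fun _ _ => C) (expBarrier C A B a) t x = 0 := by
  simp only [parabolicOp, timeDeriv_expBarrier, laplacian_expBarrier, expBarrier]
  ring

theorem expBarrier_mul_exp (ε b t : ℝ) (x : Fin n → ℝ) :
    expBarrier C (ε * Real.exp b) ε a t x =
      ε * Real.exp (-C * t) * (Real.exp (a ⬝ᵥ x + a ⬝ᵥ a * t + b) - 1) := by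
  rw [expBarrier, Real.exp_add _ b]
  ring

variable {ε b t S P : ℝ} {x : Fin n → ℝ}

theorem expBarrier_nonpos (hε : 0 ≤ ε) (hphase : a ⬝ᵥ x + a ⬝ᵥ a * t + b ≤ 0) :
    expBarrier C (ε * Real.exp b) ε a t x ≤ 0 := by
  rw [expBarrier_mul_exp]
  exact mul_nonpos_of_nonneg_of_nonpos (by positivity)
    (sub_nonpos.2 (Real.exp_le_one_iff.2 hphase))

theorem expBarrier_pos (hε : 0 < ε) (hphase : 0 < a ⬝ᵥ x + a ⬝ᵥ a * t + b) :
    0 < expBarrier C (ε * Real.exp b) ε a t x := by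
  rw [expBarrier_mul_exp]
  exact mul_pos (by positivity) (sub_pos.2 (Real.one_lt_exp_iff.2 hphase))

theorem expBarrier_le (hε : 0 ≤ ε) (ht : t ∈ Icc 0 S)
    (hphase : a ⬝ᵥ x + a ⬝ᵥ a * t + b ≤ P) :
    expBarrier C (ε * Real.exp b) ε a t x ≤ ε * Real.exp (|C| * S + P) := by
  have hdamp : -C * t ≤ |C| * S := mul_le_mul (neg_le_abs C) ht.2 ht.1 (abs_nonneg C)
  rw [expBarrier_mul_exp]
  calc ε * Real.exp (-C * t) * (Real.exp (a ⬝ᵥ x + a ⬝ᵥ a * t + b) - 1)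
      ≤ ε * Real.exp (-C * t) * Real.exp P := mul_le_mul_of_nonneg_left
        ((sub_le_self _ zero_le_one).trans (Real.exp_le_exp.2 hphase)) (by positivity)
    _ ≤ ε * Real.exp (|C| * S) * Real.exp P := by gcongr
    _ = ε * Real.exp (|C| * S + P) := by rw [mul_assoc, Real.exp_add]

end ExpBarrier

section Positivity

variable {n : ℕ} [NeZero n] {Ω : Set (Fin n → ℝ)} {S T τ δ m C : ℝ}
  {c f g u : ℝ → (Fin n → ℝ) → ℝ}

theorem exists_expBarrier (hΩb : Bornology.IsBounded Ω) (C : ℝ) (hτ : τ < T) (hδ : 0 < δ) :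
    ∃ A B : ℝ, ∃ a : Fin n → ℝ,
      (∀ t ≤ τ, ∀ x ∈ closure Ω, expBarrier C A B a t x ≤ 0) ∧
      (∀ t ∈ Icc 0 S, ∀ x ∈ closure Ω, expBarrier C A B a t x ≤ δ) ∧
      ∀ x ∈ closure Ω, 0 < expBarrier C A B a T x := by
  obtain ⟨R, hR, hΩR⟩ := hΩb.closure.exists_pos_norm_le
  have hcoord : ∀ x ∈ closure Ω, -R ≤ x 0 ∧ x 0 ≤ R := fun x hx =>
    abs_le.1 ((norm_le_pi_norm x 0).trans (hΩR x hx))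
  -- The barrier is positive ahead of the front `x 0 = R - α (t - τ)`, which enters the slab
  -- `|x 0| ≤ R` at time `τ` and has left it by time `T` once `α (T - τ) > 2 R`.
  obtain ⟨α, hα, hαT⟩ : ∃ α : ℝ, 0 < α ∧ 2 * R < α * (T - τ) := by
    have hTτ : 0 < T - τ := sub_pos.2 hτ
    refine ⟨3 * R / (T - τ), by positivity, ?_⟩
    rw [div_mul_cancel₀ _ hTτ.ne']
    linarith
  set a : Fin n → ℝ := Pi.single 0 α
  set b := -α * (R + α * τ)
  set P := α ^ 2 * (S - τ)
  set ε := δ * Real.exp (-(|C| * S + P))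
  have hε : 0 < ε := by positivity
  have hphase (t : ℝ) (x : Fin n → ℝ) :
      a ⬝ᵥ x + a ⬝ᵥ a * t + b = α * (x 0 - R + α * (t - τ)) := by
    simp only [a, b, single_dotProduct, Pi.single_eq_same]
    ring
  refine ⟨ε * Real.exp b, ε, a, fun t ht x hx => expBarrier_nonpos C a hε.le ?_,
    fun t ht x hx => ?_, fun x hx => expBarrier_pos C a hε ?_⟩
  · rw [hphase]
    have hshift : α * (t - τ) ≤ 0 := mul_nonpos_of_nonneg_of_nonpos hα.le (sub_nonpos.2 ht)
    exact mul_nonpos_of_nonneg_of_nonpos hα.le (by linarith [(hcoord x hx).2])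
  · have hle : a ⬝ᵥ x + a ⬝ᵥ a * t + b ≤ P := by
      calc a ⬝ᵥ x + a ⬝ᵥ a * t + b = α * (x 0 - R + α * (t - τ)) := hphase t x
        _ ≤ α * (0 + α * (S - τ)) := by
          gcongr
          exacts [sub_nonpos.2 (hcoord x hx).2, ht.2]
        _ = P := by ring
    calc expBarrier C (ε * Real.exp b) ε a t x ≤ ε * Real.exp (|C| * S + P) :=
          expBarrier_le C a hε.le ht hle
      _ = δ := by rw [mul_assoc, ← Real.exp_add, neg_add_cancel, Real.exp_zero, mul_one]
  · rw [hphase]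
    exact mul_pos hα (by linarith [(hcoord x hx).1])

namespace IsClassicalSolution

theorem pos_of_lateral_pos (hΩo : IsOpen Ω) (hΩb : Bornology.IsBounded Ω)
    (hu : IsClassicalSolution Ω S c f g u) (hmc : ∀ t ∈ Ioo 0 S, ∀ x ∈ Ω, m ≤ c t x)
    (hcC : ∀ t ∈ Ioo 0 S, ∀ x ∈ Ω, c t x ≤ C) (hf : ∀ t ∈ Ioo 0 S, ∀ x ∈ Ω, 0 ≤ f t x)
    (hg : ∀ t ∈ Icc 0 S, ∀ x ∈ frontier Ω, 0 ≤ g t x) (hτ : 0 ≤ τ) (hδ : 0 < δ)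
    (hlat : ∀ t ∈ Ioc τ S, ∀ x ∈ frontier Ω, δ ≤ g t x) :
    ∀ t ∈ Ioc τ S, ∀ x ∈ closure Ω, 0 < u t x := by
  intro T hT y hy
  have hu0 := hu.nonneg hΩo hΩb hmc hf hg
  obtain ⟨A, B, a, hearly, hsmall, hpos⟩ := exists_expBarrier (S := S) hΩb C hT.1 hδ
  refine (hpos y hy).trans_le (le_of_parabolicOp_le hΩo hΩb
    (parabolicRegular_expBarrier C A B a Ω S) hu.toParabolicRegular (c := fun _ _ => C)
    (fun _ _ _ _ => le_rfl) (fun t ht x hx => ?_) (fun t ht x hx => ?_) (fun x hx => ?_)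
    T ⟨hτ.trans hT.1.le, hT.2⟩ y hy)
  · have hop : 0 ≤ parabolicOp c u t x := (hf t ht x hx).trans_eq (hu.eqn t ht x hx).symm
    rw [parabolicOp_expBarrier, parabolicOp_eq_add_sub_mul (d := c)]
    exact add_nonneg hop (mul_nonneg (sub_nonneg.2 (hcC t ht x hx))
      (hu0 t (Ioo_subset_Icc_self ht) x (subset_closure hx)))
  · have hx' := frontier_subset_closure hx
    rcases le_or_gt t τ with htτ | htτ
    · exact (hearly t htτ x hx').trans (hu0 t ht x hx')
    · rw [hu.lateral t ht x hx]
      exact (hsmall t ht x hx').trans (hlat t ⟨htτ, ht.2⟩ x hx)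
  · exact (hearly 0 hτ x hx).trans (hu.initial x hx).ge

end IsClassicalSolution

end Positivity

end Paper

theorem statement5_general {n : ℕ} [NeZero n] {Ω : Set (Fin n → ℝ)} (hΩo : IsOpen Ω)
    (hΩb : Bornology.IsBounded Ω) (hΩne : Ω.Nonempty) {S δ₁ δ₂ : ℝ} (hδ₁ : 0 < δ₁)
    (hδ₁S : δ₁ ≤ S) (hδ₂ : 0 < δ₂) {χ : ℝ → (Fin n → ℝ) → ℝ}
    (hχ0 : ∀ t ∈ Icc 0 S, ∀ x ∈ frontier Ω, 0 ≤ χ t x)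
    (hχδ : ∀ t ∈ Icc δ₁ S, ∀ x ∈ frontier Ω, δ₂ ≤ χ t x)
    {q V : ℝ → (Fin n → ℝ) → ℝ} {m C : ℝ} (hmV : ∀ t ∈ Ioo 0 S, ∀ x ∈ Ω, m ≤ V t x)
    (hVq : ∀ t ∈ Ioo 0 S, ∀ x ∈ Ω, V t x ≤ q t x) (hqC : ∀ t ∈ Ioo 0 S, ∀ x ∈ Ω, q t x ≤ C)
    {w v : ℝ → (Fin n → ℝ) → ℝ}
    (hw : IsClassicalSolution Ω S q (fun _ _ => (0 : ℝ)) χ w)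
    (hv : IsClassicalSolution Ω S V (fun _ _ => (0 : ℝ)) χ v) :
    0 < sInf ((fun p : ℝ × (Fin n → ℝ) => w p.1 p.2) '' (Icc δ₁ S ×ˢ closure Ω)) ∧
    ∀ t ∈ Icc δ₁ S, ∀ x ∈ closure Ω,
      sInf ((fun p : ℝ × (Fin n → ℝ) => w p.1 p.2) '' (Icc δ₁ S ×ˢ closure Ω)) ≤ v t x := by
  have hmq : ∀ t ∈ Ioo 0 S, ∀ x ∈ Ω, m ≤ q t x :=
    fun t ht x hx => (hmV t ht x hx).trans (hVq t ht x hx)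
  obtain ⟨τ, hτ, hlat⟩ := hw.exists_lateral_lower_bound hΩb hδ₁ hδ₁S
    fun t ht x hx => (half_lt_self hδ₂).trans_le (hχδ t ht x hx)
  have hpos := hw.pos_of_lateral_pos hΩo hΩb hmq hqC (fun _ _ _ _ => le_rfl) hχ0 hτ.1
    (half_pos hδ₂) fun t ht x hx => (hlat t ht x hx).le
  have hwv := hw.le_of_potential_le hΩo hΩb hv hmV hVq (fun _ _ _ _ => le_rfl)
    (fun _ _ _ _ => le_rfl) (hw.nonneg hΩo hΩb hmq (fun _ _ _ _ => le_rfl) hχ0)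
  have himage : IsCompact ((fun p : ℝ × (Fin n → ℝ) => w p.1 p.2) '' (Icc δ₁ S ×ˢ closure Ω)) :=
    (isCompact_Icc.prod hΩb.isCompact_closure).image_of_continuousOn
      (hw.cont.mono (prod_mono_left (Icc_subset_Icc_left hδ₁.le)))
  constructor
  · obtain ⟨⟨t, x⟩, ⟨ht, hx⟩, hmin⟩ :=
      himage.sInf_mem (((nonempty_Icc.2 hδ₁S).prod hΩne.closure).image _)
    exact hmin ▸ hpos t ⟨hτ.2.trans_le ht.1, ht.2⟩ x hx
  · intro t ht x hx
    exact (csInf_le himage.bddBelow ⟨(t, x), ⟨ht, hx⟩, rfl⟩).trans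
      (hwv t ⟨hδ₁.le.trans ht.1, ht.2⟩ x hx)

/-- the key lower bound (2.13): with `χ = δ₂` on `[δ₁,S] × ∂Ω` and `V ≤ q`,
the constant `a₁ := inf_{[δ₁,S] × cl Ω} w` is strictly positive and `v ≥ a₁` on
`[δ₁,S] × cl Ω`. -/
theorem statement5 {n : ℕ} (hn : 2 ≤ n) (Ω : Set (Fin n → ℝ)) (hΩo : IsOpen Ω)
    (hΩb : Bornology.IsBounded Ω) (hΩc : IsConnected Ω)
    (S δ₁ δ₂ : ℝ) (hS : 0 < S) (hδ₁ : 0 < δ₁) (hδ₁S : δ₁ < S) (hδ₂ : 0 < δ₂)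
    (χ : ℝ → (Fin n → ℝ) → ℝ)
    (hχc : ContinuousOn (fun p : ℝ × (Fin n → ℝ) => χ p.1 p.2) (Icc 0 S ×ˢ frontier Ω))
    (hχ0 : ∀ t ∈ Icc 0 S, ∀ x ∈ frontier Ω, 0 ≤ χ t x)
    (hχδ : ∀ t ∈ Icc δ₁ S, ∀ x ∈ frontier Ω, χ t x = δ₂)
    (q V : ℝ → (Fin n → ℝ) → ℝ)
    (hqc : ContinuousOn (fun p : ℝ × (Fin n → ℝ) => q p.1 p.2) (Ioo 0 S ×ˢ Ω))
    (hqb : ∃ C, ∀ t ∈ Ioo 0 S, ∀ x ∈ Ω, |q t x| ≤ C)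
    (hVc : ContinuousOn (fun p : ℝ × (Fin n → ℝ) => V p.1 p.2) (Ioo 0 S ×ˢ Ω))
    (hVb : ∃ C, ∀ t ∈ Ioo 0 S, ∀ x ∈ Ω, |V t x| ≤ C)
    (hVq : ∀ t ∈ Ioo 0 S, ∀ x ∈ Ω, V t x ≤ q t x)
    (w v : ℝ → (Fin n → ℝ) → ℝ)
    (hw : IsClassicalSolution Ω S q (fun _ _ => (0 : ℝ)) χ w)
    (hv : IsClassicalSolution Ω S V (fun _ _ => (0 : ℝ)) χ v) :
    0 < sInf ((fun p : ℝ × (Fin n → ℝ) => w p.1 p.2) '' (Icc δ₁ S ×ˢ closure Ω)) ∧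
    ∀ t ∈ Icc δ₁ S, ∀ x ∈ closure Ω,
      sInf ((fun p : ℝ × (Fin n → ℝ) => w p.1 p.2) '' (Icc δ₁ S ×ˢ closure Ω)) ≤ v t x := by
  obtain ⟨Cq, hq⟩ := hqb
  obtain ⟨CV, hV⟩ := hVb
  have : NeZero n := ⟨by lia⟩
  exact statement5_general hΩo hΩb hΩc.nonempty hδ₁ hδ₁S.le hδ₂ hχ0
    (fun t ht x hx => (hχδ t ht x hx).ge) (fun t ht x hx => (abs_le.1 (hV t ht x hx)).1) hVq
    (fun t ht x hx => (abs_le.1 (hq t ht x hx)).2) hw hv
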